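/- Let R be an s-unital exchange ring. Then R is purely infinite if and only if R is properly purely infinite. -/

import Mathlib

/-- `x ≼ y` for square matrices over a (possibly nonunital) ring: `x = α * y * β`
for some rectangular matrices `α`, `β`. -/
def MatSub {R : Type*} [NonUnitalRing R] {k n : ℕ}
    (x : Matrix (Fin k) (Fin k) R) (y : Matrix (Fin n) (Fin n) R) : Prop :=
  ∃ (α : Matrix (Fin k) (Fin n) R) (β : Matrix (Fin n) (Fin k) R), x = α * y * β

/-- `a ⊕ b ≼ c` for ring elements: the block-diagonal matrix `diag(a, b)` satisfies
`diag(a,b) ≼ (c)` as square matrices. -/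
def PairSub {R : Type*} [NonUnitalRing R] (a b c : R) : Prop :=
  MatSub !![a, 0; 0, b] !![c]

/-- `a ≼ b` for ring elements: `a = α * b * β` for some ring elements. -/
def ElemSub {R : Type*} [NonUnitalRing R] (a b : R) : Prop :=
  ∃ α β : R, a = α * b * β

/-- `K(a) = { x | a ⊕ x ≼ a }`. -/
def KSet {R : Type*} [NonUnitalRing R] (a : R) : Set R := { x | PairSub a x a }

/-- An element `a` is infinite if `a ⊕ x ≼ a` for some nonzero `x`, i.e. `K(a) ≠ 0`. -/
def IsInfiniteElem {R : Type*} [NonUnitalRing R] (a : R) : Prop :=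
  ∃ x : R, x ≠ 0 ∧ PairSub a x a

/-- An element `a` is properly infinite if `a ≠ 0` and `a ⊕ a ≼ a`. -/
def IsProperlyInfiniteElem {R : Type*} [NonUnitalRing R] (a : R) : Prop :=
  a ≠ 0 ∧ PairSub a a a

/-- A ring is s-unital if each element `x` admits `u, v` with `u * x = x` and `x * v = x`. -/
def IsSUnitalRing (R : Type*) [NonUnitalRing R] : Prop :=
  ∀ x : R, (∃ u : R, u * x = x) ∧ (∃ v : R, x * v = x)

/-- `b` belongs to `RaR`, the set of finite sums `Σ xᵢ * a * yᵢ`. -/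
def MemRaR {R : Type*} [NonUnitalRing R] (a b : R) : Prop :=
  ∃ (n : ℕ) (x y : Fin n → R), b = ∑ i, x i * a * y i

/-- A (possibly nonunital) ring is a division ring: it has a nonzero multiplicative identity
with respect to which every nonzero element is two-sided invertible. -/
def IsDivisionRingPred (R : Type*) [NonUnitalRing R] : Prop :=
  ∃ u : R, u ≠ 0 ∧ (∀ x : R, u * x = x ∧ x * u = x) ∧
    ∀ x : R, x ≠ 0 → ∃ y : R, x * y = u ∧ y * x = u

/-- A ring `R` is purely infinite if no quotient of `R` by a two-sided ideal is a division
ring, and `b ∈ RaR` implies `b = x * a * y` for some `x, y ∈ R`. -/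
def IsPurelyInfiniteRing (R : Type*) [NonUnitalRing R] : Prop :=
  (∀ I : TwoSidedIdeal R, ¬ IsDivisionRingPred I.ringCon.Quotient) ∧
  ∀ a b : R, MemRaR a b → ElemSub b a

/-- A ring is properly purely infinite if every nonzero element is properly infinite. -/
def IsProperlyPurelyInfiniteRing (R : Type*) [NonUnitalRing R] : Prop :=
  ∀ a : R, a ≠ 0 → IsProperlyInfiniteElem a

/-- An idempotent `e` is infinite if `e ∼ f ≤ e` for some idempotent `f ≠ e`. -/
def IsInfiniteIdem {R : Type*} [NonUnitalRing R] (e : R) : Prop :=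
  IsIdempotentElem e ∧ ∃ f : R, IsIdempotentElem f ∧ (∃ x y : R, e = x * y ∧ f = y * x) ∧
    e * f = f ∧ f * e = f ∧ f ≠ e

/-- An exchange ring: for each `x` there are an idempotent `e` and elements `r, s` with
`e = x * r = x + s - x * s`. -/
def IsExchangeRing (R : Type*) [NonUnitalRing R] : Prop :=
  ∀ x : R, ∃ e r s : R, IsIdempotentElem e ∧ e = x * r ∧ e = x + s - x * s

/-- A ring has local units if every finite subset is contained in a corner `eRe`
for some idempotent `e`. -/
def HasLocalUnits (R : Type*) [NonUnitalRing R] : Prop :=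
  ∀ s : Finset R, ∃ e : R, IsIdempotentElem e ∧ ∀ x ∈ s, ∃ r : R, x = e * r * e

theorem pairSub_iff {R : Type*} [NonUnitalRing R] (a b c : R) :
    PairSub a b c ↔ ∃ α₁ α₂ β₁ β₂ : R, α₁ * c * β₁ = a ∧ α₁ * c * β₂ = 0 ∧
      α₂ * c * β₁ = 0 ∧ α₂ * c * β₂ = b := by
  constructor
  · rintro ⟨α, β, h⟩
    refine ⟨α 0 0, α 1 0, β 0 0, β 0 1, ?_, ?_, ?_, ?_⟩
    · have := congrFun (congrFun h 0) 0
      simpa [Matrix.mul_apply] using this.symm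
    · have := congrFun (congrFun h 0) 1
      simpa [Matrix.mul_apply] using this.symm
    · have := congrFun (congrFun h 1) 0
      simpa [Matrix.mul_apply] using this.symm
    · have := congrFun (congrFun h 1) 1
      simpa [Matrix.mul_apply] using this.symm
  · rintro ⟨α₁, α₂, β₁, β₂, h1, h2, h3, h4⟩
    refine ⟨!![α₁; α₂], !![β₁, β₂], ?_⟩
    ext i j
    fin_cases i <;> fin_cases j <;> simp [Matrix.mul_apply, h1, h2, h3, h4]

theorem reassoc_aux {R : Type*} [NonUnitalRing R] {x y z : R} (h : x * y = z) (w : R) :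
    x * (y * w) = z * w := by rw [← mul_assoc, h]

/-- The easy direction. -/
theorem easy_dir {R : Type*} [NonUnitalRing R] (h : IsProperlyPurelyInfiniteRing R) :
    IsPurelyInfiniteRing R := by
  constructor
  · rintro I ⟨u, hu0, hu1, hinv⟩
    obtain ⟨a, rfl⟩ := Quotient.exists_rep u
    change (a : I.ringCon.Quotient) ≠ 0 at hu0
    have ha : a ≠ 0 := by
      rintro rfl
      exact hu0 rfl
    obtain ⟨-, hp⟩ := h a ha
    obtain ⟨α₁, α₂, β₁, β₂, h1, h2, h3, h4⟩ := (pairSub_iff _ _ _).1 hp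
    have key : ∀ x y : R, ((x * a * y : R) : I.ringCon.Quotient) = (x : I.ringCon.Quotient) * y := by
      intro x y
      rw [RingCon.coe_mul, RingCon.coe_mul]
      have := (hu1 (x : I.ringCon.Quotient)).2
      change (x : I.ringCon.Quotient) * (a : I.ringCon.Quotient) = x at this
      rw [this]
    have k1 := key α₁ β₁
    have k2 := key α₁ β₂
    have k4 := key α₂ β₂
    rw [h1] at k1
    rw [h2] at k2
    rw [h4] at k4
    have hα : (α₁ : I.ringCon.Quotient) ≠ 0 := by
      intro h0
      rw [h0, zero_mul] at k1
      exact hu0 k1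
    obtain ⟨y, -, hy⟩ := hinv _ hα
    change y * (α₁ : I.ringCon.Quotient) = (a : I.ringCon.Quotient) at hy
    have hβ : (β₂ : I.ringCon.Quotient) = 0 := by
      have := (hu1 (β₂ : I.ringCon.Quotient)).1
      change (a : I.ringCon.Quotient) * (β₂ : I.ringCon.Quotient) = β₂ at this
      rw [← this, ← hy, mul_assoc, ← k2]
      exact mul_zero y
    rw [hβ, mul_zero] at k4
    exact hu0 k4
  · rintro a b ⟨n, x, y, rfl⟩
    by_cases ha : a = 0
    · subst ha
      exact ⟨0, 0, by simp⟩
    obtain ⟨-, hp⟩ := h a ha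
    obtain ⟨α₁, α₂, β₁, β₂, h1, h2, h3, h4⟩ := (pairSub_iff _ _ _).1 hp
    induction n with
    | zero => exact ⟨0, 0, by simp⟩
    | succ n ih =>
      obtain ⟨p, q, hpq⟩ := ih (fun i => x i.succ) (fun i => y i.succ)
      rw [Fin.sum_univ_succ, hpq]
      refine ⟨x 0 * α₁ + p * α₂, β₁ * y 0 + β₂ * q, ?_⟩
      simp only [mul_assoc] at h1 h2 h3 h4
      have e1 := fun w => congrArg (· * w) h1
      have e2 := fun w => congrArg (· * w) h2
      have e3 := fun w => congrArg (· * w) h3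
      have e4 := fun w => congrArg (· * w) h4
      simp only [mul_assoc] at e1 e2 e3 e4
      simp [add_mul, mul_add, mul_assoc, e1, e2, e3, e4]

/-- Two-sided ideals of a unital ring, as sets. -/
structure IsId {S : Type*} [Ring S] (M : Set S) : Prop where
  zero : (0 : S) ∈ M
  add : ∀ x y, x ∈ M → y ∈ M → x + y ∈ M
  left : ∀ x y, y ∈ M → x * y ∈ M
  right : ∀ x y, x ∈ M → x * y ∈ M

theorem IsId.neg {S : Type*} [Ring S] {M : Set S} (h : IsId M) {x : S} (hx : x ∈ M) :
    -x ∈ M := by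
  have := h.left (-1) x hx
  simpa using this

theorem IsId.sub {S : Type*} [Ring S] {M : Set S} (h : IsId M) {x y : S} (hx : x ∈ M)
    (hy : y ∈ M) : x - y ∈ M := by
  rw [sub_eq_add_neg]
  exact h.add _ _ hx (h.neg hy)

theorem exists_max {S : Type*} [Ring S] (K : Set S) (hK : IsId K) (h1 : (1 : S) ∉ K) :
    ∃ M : Set S, K ⊆ M ∧ Maximal (· ∈ {M : Set S | IsId M ∧ (1 : S) ∉ M}) M := by
  refine zorn_subset_nonempty {M : Set S | IsId M ∧ (1 : S) ∉ M} ?_ K ⟨hK, h1⟩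
  intro c hc hch ⟨s0, hs0⟩
  refine ⟨⋃₀ c, ⟨⟨?_, ?_, ?_, ?_⟩, ?_⟩, fun s hs => Set.subset_sUnion_of_mem hs⟩
  · exact ⟨s0, hs0, (hc hs0).1.zero⟩
  · rintro x y ⟨s, hs, hx⟩ ⟨t, ht, hy⟩
    rcases hch.total hs ht with h | h
    · exact ⟨t, ht, (hc ht).1.add _ _ (h hx) hy⟩
    · exact ⟨s, hs, (hc hs).1.add _ _ hx (h hy)⟩
  · rintro x y ⟨s, hs, hy⟩
    exact ⟨s, hs, (hc hs).1.left _ _ hy⟩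
  · rintro x y ⟨s, hs, hx⟩
    exact ⟨s, hs, (hc hs).1.right _ _ hx⟩
  · rintro ⟨s, hs, h⟩
    exact (hc hs).2 h

/-- `K(1)` for a unital ring. -/
def KOne (S : Type*) [Ring S] : Set S :=
  {x | ∃ α₁ α₂ β₁ β₂ : S, α₁ * β₁ = 1 ∧ α₁ * β₂ = 0 ∧ α₂ * β₁ = 0 ∧ α₂ * β₂ = x}

theorem kOne_isId (S : Type*) [Ring S] : IsId (KOne S) where
  zero := ⟨1, 0, 1, 0, by simp, by simp, by simp, by simp⟩
  add := by
    rintro x y ⟨α₁, α₂, β₁, β₂, h1, h2, h3, h4⟩ ⟨γ₁, γ₂, δ₁, δ₂, k1, k2, k3, k4⟩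
    have e1 := reassoc_aux k1
    have e3 := reassoc_aux k3
    refine ⟨α₁ * γ₁, α₂ * γ₁ + γ₂, δ₁ * β₁, δ₁ * β₂ + δ₂, ?_, ?_, ?_, ?_⟩ <;>
      simp [add_mul, mul_add, mul_assoc, *]
  left := by
    rintro x y ⟨α₁, α₂, β₁, β₂, h1, h2, h3, h4⟩
    refine ⟨α₁, x * α₂, β₁, β₂, ?_, ?_, ?_, ?_⟩ <;> simp [mul_assoc, *]
  right := by
    rintro x y ⟨α₁, α₂, β₁, β₂, h1, h2, h3, h4⟩
    refine ⟨α₁, α₂, β₁, β₂ * y, ?_, ?_, ?_, ?_⟩ <;> simp [← mul_assoc, *]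

theorem mem_kOne_of {S : Type*} [Ring S]
    (h2 : ∀ a p q r s : S, ∃ x y, p * a * q + r * a * s = x * a * y)
    (f α₁ α₂ β₁ β₂ : S) (hf : f * f = f) (h11 : α₁ * β₁ = f) (h12 : α₁ * β₂ = 0)
    (h21 : α₂ * β₁ = 0) (h22 : α₂ * β₂ = f) : f ∈ KOne S := by
  obtain ⟨x, y, hxy⟩ := h2 f β₁ α₁ β₂ α₂
  have hf' := reassoc_aux hf
  have r11 := reassoc_aux h11
  have r12 := reassoc_aux h12
  have r21 := reassoc_aux h21
  have r22 := reassoc_aux h22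
  have key : ∀ u v : S, u * (x * (f * (y * v))) = u * (β₁ * (f * (α₁ * v)))
      + u * (β₂ * (f * (α₂ * v))) := by
    intro u v
    have := congrArg (fun t => u * t * v) hxy
    simp only [mul_add, add_mul, mul_assoc] at this
    exact this.symm
  have c11 : α₁ * (x * (f * (y * β₁))) = f := by rw [key]; simp [*]
  have c12 : α₁ * (x * (f * (y * β₂))) = 0 := by rw [key]; simp [*]
  have c21 : α₂ * (x * (f * (y * β₁))) = 0 := by rw [key]; simp [*]
  have c22 : α₂ * (x * (f * (y * β₂))) = f := by rw [key]; simp [*]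
  have d : ∀ a b c : S, a * (x * (f * (y * b))) = c → ∀ w, a * (x * (f * (y * (b * w)))) = c * w := by
    intro a b c h w
    rw [← h]; simp only [mul_assoc]
  refine ⟨(1 - f) + f * α₁ * x * f, f * α₂ * x * f, (1 - f) + f * y * β₁ * f, f * y * β₂ * f,
    ?_, ?_, ?_, ?_⟩ <;>
  simp [add_mul, mul_add, sub_mul, mul_sub, mul_assoc, hf, hf', d _ _ _ c11, d _ _ _ c12,
    d _ _ _ c21, d _ _ _ c22]

theorem unital_core {S : Type*} [Ring S]
    (h2 : ∀ a p q r s : S, ∃ x y, p * a * q + r * a * s = x * a * y)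
    (hex : ∀ x : S, ∃ e r s : S, e * e = e ∧ e = x * r ∧ 1 - e = (1 - x) * s)
    (hdiv : ∀ M : Set S, IsId M → (1 : S) ∉ M → ¬ ∀ x ∉ M, ∃ y, x * y - 1 ∈ M) :
    (1 : S) ∈ KOne S := by
  by_contra h1
  obtain ⟨M, hKM, ⟨hM, hM1⟩, hmax⟩ := exists_max _ (kOne_isId S) h1
  -- every element outside M generates, with one term
  have gen : ∀ x ∉ M, ∃ a b, 1 - a * x * b ∈ M := by
    intro x hx
    by_contra hcon
    push Not at hcon
    have hI : IsId {z : S | ∃ a b, z - a * x * b ∈ M} := by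
      refine ⟨⟨0, 0, by simpa using hM.zero⟩, ?_, ?_, ?_⟩
      · rintro z w ⟨a, b, h⟩ ⟨c, d, h'⟩
        obtain ⟨p, q, hpq⟩ := h2 x a b c d
        refine ⟨p, q, ?_⟩
        have := hM.add _ _ h h'
        rw [← hpq]
        convert this using 1
        abel
      · rintro w z ⟨a, b, h⟩
        refine ⟨w * a, b, ?_⟩
        have := hM.left w _ h
        simpa [mul_sub, mul_assoc] using this
      · rintro z w ⟨a, b, h⟩
        refine ⟨a, b * w, ?_⟩
        have := hM.right _ w h
        simpa [sub_mul, mul_assoc] using this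
    have := hmax (y := {z : S | ∃ a b, z - a * x * b ∈ M})
      ⟨hI, fun ⟨a, b, h⟩ => hcon a b h⟩ (fun z hz => ⟨0, 0, by simpa using hz⟩)
    exact hx (this ⟨1, 1, by simpa using hM.zero⟩)
  -- a nontrivial idempotent
  obtain ⟨g, hg, hgM, hgM'⟩ : ∃ g : S, g * g = g ∧ g ∉ M ∧ 1 - g ∉ M := by
    by_contra hcon
    push Not at hcon
    apply hdiv M hM hM1
    intro x hx
    obtain ⟨a, b, hab⟩ := gen x hx
    obtain ⟨g, r, s, hg, hgr, hgs⟩ := hex (x * b * a)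
    by_cases hgM : g ∈ M
    · exfalso
      apply hM1
      -- p * (1 - p) ∈ M where p = x b a
      have e1 : x * b * a * (1 - x * b * a) ∈ M := by
        have := hM.left (x * b) _ (hM.right _ a hab)
        convert this using 1
        noncomm_ring
      have e2 : x * b * a * (1 - g) ∈ M := by
        rw [hgs, ← mul_assoc]
        exact hM.right _ _ e1
      have e3 : x * b * a ∈ M := by
        have := hM.add _ _ e2 (hM.left (x * b * a) _ hgM)
        simpa [mul_sub] using this
      have e4 : a * (x * b * a) * (x * b) ∈ M := hM.right _ _ (hM.left _ _ e3)
      have e5 : (1 - a * x * b) * (1 + a * x * b) ∈ M := hM.right _ _ hab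
      have := hM.add _ _ e4 e5
      convert this using 1
      noncomm_ring
    · have := hcon g hg hgM
      refine ⟨b * a * r, ?_⟩
      have := hM.neg this
      rw [hgr] at this
      convert this using 1
      noncomm_ring
  obtain ⟨a, b, hab⟩ := gen g hgM
  obtain ⟨c, d, hcd⟩ := gen (1 - g) hgM'
  obtain ⟨f, r, s, hf, hfr, hfs⟩ := hex (a * g * b * (c * (1 - g) * d))
  have hx : 1 - a * g * b * (c * (1 - g) * d) ∈ M := by
    have := hM.add _ _ hab (hM.left (a * g * b) _ hcd)
    convert this using 1
    noncomm_ring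
  have hfM' : 1 - f ∈ M := by
    rw [hfs]
    exact hM.right _ _ hx
  have hfM : f ∉ M := by
    intro h
    have := hM.add _ _ h hfM'
    exact hM1 (by simpa using this)
  apply hfM
  apply hKM
  have g0 : g * (1 - g) = 0 := by simp [mul_sub, hg]
  have g0' : (1 - g) * g = 0 := by simp [sub_mul, hg]
  have g1 : (1 - g) * (1 - g) = 1 - g := by simp [sub_mul, mul_sub, hg]
  generalize 1 - g = g' at *
  refine mem_kOne_of h2 f (a * g) (a * g * b * c * g') (g * b * c * g' * d * r) (g' * d * r) hf
    ?_ ?_ ?_ ?_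
  · rw [hfr]
    simp only [mul_assoc, reassoc_aux hg]
  · simp only [mul_assoc, reassoc_aux g0, zero_mul, mul_zero]
  · simp only [mul_assoc, reassoc_aux g0', zero_mul, mul_zero]
  · rw [hfr]
    simp only [mul_assoc, reassoc_aux g1]

theorem corner_e {R : Type*} [NonUnitalRing R] {e : R} (he : IsIdempotentElem e)
    (x : he.Corner) : e * x.1 = x.1 ∧ x.1 * e = x.1 :=
  (Subsemigroup.mem_corner_iff he).mp x.2

/-- Compression to the corner. -/
def compr {R : Type*} [NonUnitalRing R] {e : R} (he : IsIdempotentElem e) (r : R) : he.Corner :=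
  ⟨e * r * e, r, rfl⟩

theorem corner_div {R : Type*} [NonUnitalRing R]
    (h2 : ∀ a p q r s : R, ∃ x y, p * a * q + r * a * s = x * a * y)
    (hI : ∀ I : TwoSidedIdeal R, ¬ IsDivisionRingPred I.ringCon.Quotient)
    {e : R} (he : IsIdempotentElem e) (M : Set he.Corner) (hM : IsId M) (h1 : 1 ∉ M)
    (hdiv : ∀ x ∉ M, ∃ y, x * y - 1 ∈ M) : False := by
  have hee : e * e = e := he
  have ree := reassoc_aux hee
  have hprime : ∀ x y, x ∉ M → y ∉ M → x * y ∉ M := by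
    intro x y hx hy hxy
    obtain ⟨z, hz⟩ := hdiv y hy
    apply hx
    have := hM.sub (hM.right _ z hxy) (hM.left x _ hz)
    convert this using 1
    noncomm_ring
  have hinv : ∀ x ∉ M, ∃ y, x * y - 1 ∈ M ∧ y * x - 1 ∈ M := by
    intro x hx
    obtain ⟨y, hy⟩ := hdiv x hx
    have hyM : y ∉ M := by
      intro h
      have := hM.sub (hM.left x _ h) hy
      exact h1 (by simpa using this)
    obtain ⟨z, hz⟩ := hdiv y hyM
    refine ⟨y, hy, ?_⟩
    -- x ≡ x y z ≡ z
    have k : x - z ∈ M := by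
      have := hM.sub (hM.right _ z hy) (hM.left x _ hz)
      convert this using 1
      noncomm_ring
    have := hM.add _ _ (hM.left y _ k) hz
    convert this using 1
    noncomm_ring
  have one_val : (1 : he.Corner).1 = e := rfl
  have mul_val : ∀ x y : he.Corner, (x * y).1 = x.1 * y.1 := fun _ _ => rfl
  have add_val : ∀ x y : he.Corner, (x + y).1 = x.1 + y.1 := fun _ _ => rfl
  have sub_val : ∀ x y : he.Corner, (x - y).1 = x.1 - y.1 := fun _ _ => rfl
  have neg_val : ∀ x : he.Corner, (-x).1 = -x.1 := fun _ => rfl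
  have zero_val : (0 : he.Corner).1 = 0 := rfl
  have c_val : ∀ r, (compr he r).1 = e * r * e := fun _ => rfl
  have hmul : ∀ s r : R, compr he (s * r) - compr he s * compr he r ∈ M := by
    intro s r
    by_contra hcon
    obtain ⟨z, hz⟩ : ∃ z, z = e * s - e * s * e := ⟨_, rfl⟩
    obtain ⟨w, hw⟩ : ∃ w, w = r * e - e * r * e := ⟨_, rfl⟩
    have ez : e * z = z := by simp [hz, mul_sub, mul_assoc, ree]
    have ze : z * e = 0 := by simp [hz, sub_mul, mul_assoc, hee]
    have we : w * e = w := by simp [hw, sub_mul, mul_assoc, hee]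
    have ew : e * w = 0 := by simp [hw, mul_sub, mul_assoc, ree]
    have hzw : (compr he (s * r) - compr he s * compr he r).1 = z * w := by
      rw [sub_val, mul_val, c_val, c_val, c_val, hz, hw]
      simp [sub_mul, mul_sub, mul_assoc, ree]
    obtain ⟨x, y, hxy⟩ := h2 e e e w z
    have key : ∀ u v : R, u * (x * (e * (y * v))) = u * (e * v) + u * (w * (z * v)) := by
      intro u v
      have := congrArg (fun t => u * t * v) hxy
      simp only [mul_add, add_mul, mul_assoc, ree, reassoc_aux we] at this
      exact this.symm
    have A : compr he x * compr he y = 1 := by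
      apply Subtype.ext
      rw [mul_val, c_val, c_val, one_val]
      simp only [mul_assoc, ree, key, hee, ze, mul_zero, add_zero]
    have B : compr he x * compr he (y * w) = 0 := by
      apply Subtype.ext
      rw [mul_val, c_val, c_val, zero_val]
      simp only [mul_assoc, ree, key, we, ew, reassoc_aux ew, mul_zero, add_zero, zero_mul]
    have C : compr he (z * x) * compr he (y * w) = (compr he (s * r) - compr he s * compr he r) *
        (compr he (s * r) - compr he s * compr he r) := by
      apply Subtype.ext
      rw [mul_val, c_val, c_val, mul_val, hzw]
      simp only [mul_assoc, ree, reassoc_aux ez, key, we, ew, mul_zero, zero_add]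
    have hx : compr he x ∉ M := by
      intro h
      exact h1 (A ▸ hM.right _ _ h)
    have hyw : compr he (y * w) ∉ M := by
      intro h
      have := hM.left (compr he (z * x)) _ h
      rw [C] at this
      exact hprime _ _ hcon hcon this
    have := hprime _ _ hx hyw
    rw [B] at this
    exact this hM.zero
  have c_add : ∀ r s, compr he (r + s) = compr he r + compr he s := by
    intro r s
    apply Subtype.ext
    rw [add_val, c_val, c_val, c_val]
    simp [mul_add, add_mul]
  have c_neg : ∀ r, compr he (-r) = - compr he r := by
    intro r
    apply Subtype.ext
    rw [neg_val, c_val, c_val]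
    simp
  have c_sub : ∀ r s, compr he (r - s) = compr he r - compr he s := by
    intro r s
    rw [sub_eq_add_neg, c_add, c_neg, sub_eq_add_neg]
  have c_zero : compr he 0 = 0 := by
    apply Subtype.ext
    rw [c_val, zero_val]; simp
  have c_e : compr he e = 1 := by
    apply Subtype.ext
    rw [c_val, one_val]; simp [hee]
  have c_er : ∀ r, compr he (e * r) = compr he r := by
    intro r
    apply Subtype.ext
    rw [c_val, c_val]; simp [mul_assoc, ree]
  have c_re : ∀ r, compr he (r * e) = compr he r := by
    intro r
    apply Subtype.ext
    rw [c_val, c_val]; simp [mul_assoc, hee]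
  have c_corner : ∀ y : he.Corner, compr he y.1 = y := by
    intro y
    apply Subtype.ext
    rw [c_val, (corner_e he y).1, (corner_e he y).2]
  let N : TwoSidedIdeal R := TwoSidedIdeal.mk' {r | compr he r ∈ M}
    (by simpa [c_zero] using hM.zero)
    (by
      intro x y hx hy
      simpa [c_add] using hM.add _ _ hx hy)
    (by
      intro x hx
      simpa [c_neg] using hM.neg hx)
    (by
      intro x y hy
      have := hM.add _ _ (hmul x y) (hM.left (compr he x) _ hy)
      simpa using this)
    (by
      intro x y hx
      have := hM.add _ _ (hmul x y) (hM.right _ (compr he y) hx)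
      simpa using this)
  have hN : ∀ r s : R, (r : N.ringCon.Quotient) = s ↔ compr he r - compr he s ∈ M := by
    intro r s
    rw [RingCon.eq, TwoSidedIdeal.rel_iff, TwoSidedIdeal.mem_mk', Set.mem_setOf_eq, c_sub]
  apply hI N
  refine ⟨(e : N.ringCon.Quotient), ?_, ?_, ?_⟩
  · intro h
    have := (hN e 0).1 h
    rw [c_e, c_zero, sub_zero] at this
    exact h1 this
  · intro x
    obtain ⟨r, rfl⟩ := Quotient.exists_rep x
    constructor
    · refine (hN (e * r) r).2 ?_
      rw [c_er, sub_self]; exact hM.zero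
    · refine (hN (r * e) r).2 ?_
      rw [c_re, sub_self]; exact hM.zero
  · intro x hx
    obtain ⟨r, rfl⟩ := Quotient.exists_rep x
    have hr : compr he r ∉ M := by
      intro h
      apply hx
      refine (hN r 0).2 ?_
      rw [c_zero, sub_zero]; exact h
    obtain ⟨y, hy1, hy2⟩ := hinv _ hr
    refine ⟨(y.1 : N.ringCon.Quotient), (hN (r * y.1) e).2 ?_, (hN (y.1 * r) e).2 ?_⟩
    · have := hM.add _ _ (hmul r y.1) hy1
      rw [c_corner] at this
      rw [c_e]
      convert this using 1
      abel
    · have := hM.add _ _ (hmul y.1 r) hy2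
      rw [c_corner] at this
      rw [c_e]
      convert this using 1
      abel

/-- Every idempotent of a purely infinite exchange ring satisfies `e ⊕ e ≼ e`. -/
theorem idem_proper {R : Type*} [NonUnitalRing R] (hex : IsExchangeRing R)
    (h2 : ∀ a p q r s : R, ∃ x y, p * a * q + r * a * s = x * a * y)
    (hI : ∀ I : TwoSidedIdeal R, ¬ IsDivisionRingPred I.ringCon.Quotient)
    {e : R} (he : IsIdempotentElem e) :
    ∃ α₁ α₂ β₁ β₂ : R, α₁ * β₁ = e ∧ α₁ * β₂ = 0 ∧ α₂ * β₁ = 0 ∧ α₂ * β₂ = e := by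
  have hee : e * e = e := he
  have ree := reassoc_aux hee
  have key : (1 : he.Corner) ∈ KOne he.Corner := by
    apply unital_core
    · intro a p q r s
      obtain ⟨x, y, hxy⟩ := h2 a.1 p.1 q.1 r.1 s.1
      refine ⟨compr he x, compr he y, ?_⟩
      apply Subtype.ext
      change p.1 * a.1 * q.1 + r.1 * a.1 * s.1 = (e * x * e) * a.1 * (e * y * e)
      have := congrArg (fun t => e * t * e) hxy
      simp only [mul_add, add_mul, mul_assoc, (corner_e he q).2, (corner_e he s).2,
        reassoc_aux (corner_e he p).1, reassoc_aux (corner_e he r).1] at this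
      simp only [mul_assoc, reassoc_aux (corner_e he a).1, reassoc_aux (corner_e he a).2]
      exact this
    · intro x
      obtain ⟨g, r, s, hg, hgr, hgs⟩ := hex x.1
      have hgg : g * g = g := hg
      have eg : e * g = g := by rw [hgr, ← mul_assoc, (corner_e he x).1]
      have xe := (corner_e he x).2
      have ex := (corner_e he x).1
      refine ⟨compr he g, compr he r, 1 - compr he s, ?_, ?_, ?_⟩
      · apply Subtype.ext
        change (e * g * e) * (e * g * e) = e * g * e
        simp only [mul_assoc, ree, reassoc_aux eg, reassoc_aux hgg]
      · apply Subtype.ext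
        change e * g * e = x.1 * (e * r * e)
        rw [eg, hgr]
        simp only [mul_assoc, reassoc_aux xe]
      · have : compr he g = x + compr he s - x * compr he s := by
          apply Subtype.ext
          change e * g * e = x.1 + e * s * e - x.1 * (e * s * e)
          rw [hgs]
          simp only [mul_add, mul_sub, add_mul, sub_mul, mul_assoc, reassoc_aux xe, reassoc_aux ex,
            ex, xe]
        rw [this]
        noncomm_ring
    · intro M hM h1 hdiv
      exact corner_div h2 hI he M hM h1 hdiv
  obtain ⟨α₁, α₂, β₁, β₂, h1, h2, h3, h4⟩ := key
  exact ⟨α₁.1, α₂.1, β₁.1, β₂.1, congrArg Subtype.val h1, congrArg Subtype.val h2,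
    congrArg Subtype.val h3, congrArg Subtype.val h4⟩

theorem hard_dir {R : Type*} [NonUnitalRing R] (hs : IsSUnitalRing R) (hex : IsExchangeRing R)
    (h : IsPurelyInfiniteRing R) : IsProperlyPurelyInfiniteRing R := by
  obtain ⟨hI, hii⟩ := h
  have h2 : ∀ a p q r s : R, ∃ x y, p * a * q + r * a * s = x * a * y := by
    intro a p q r s
    exact hii a _ ⟨2, ![p, r], ![q, s], by simp [Fin.sum_univ_two]⟩
  have hright : ∀ a : R, ∃ e, IsIdempotentElem e ∧ a * e = a := by
    intro a
    obtain ⟨-, v, hv⟩ := hs a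
    obtain ⟨e, r, s, he, -, hes⟩ := hex v
    refine ⟨e, he, ?_⟩
    rw [hes, mul_sub, mul_add, ← mul_assoc, hv]
    abel
  intro a ha
  refine ⟨ha, ?_⟩
  obtain ⟨⟨u, hu⟩, -⟩ := hs a
  obtain ⟨e, he, hue⟩ := hright u
  obtain ⟨f, hf, haf⟩ := hright a
  obtain ⟨α₁, α₂, β₁, β₂, h11, h12, h21, h22⟩ := idem_proper hex h2 hI he
  obtain ⟨γ₁, γ₂, δ₁, δ₂, k11, k12, k21, k22⟩ := idem_proper hex h2 hI hf
  have uea : u * (e * a) = a := by rw [← mul_assoc, hue, hu]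
  have ueaf : u * (e * (a * f)) = a := by rw [haf, uea]
  obtain ⟨x, y, hxy⟩ := h2 a β₁ γ₁ β₂ γ₂
  rw [pairSub_iff]
  have key : ∀ p q : R, p * (x * (a * (y * q))) = p * (β₁ * (a * (γ₁ * q)))
      + p * (β₂ * (a * (γ₂ * q))) := by
    intro p q
    have := congrArg (fun t => p * t * q) hxy
    simp only [mul_add, add_mul, mul_assoc] at this
    exact this.symm
  refine ⟨u * α₁ * x, u * α₂ * x, y * δ₁, y * δ₂, ?_, ?_, ?_, ?_⟩ <;>
    simp [mul_assoc, key, k11, k12, k21, k22, reassoc_aux h11, reassoc_aux h12, reassoc_aux h21,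
      reassoc_aux h22, ueaf]

/-- Corollary 5.10 (exchangepinfstrong): an s-unital exchange ring is purely infinite if and
only if it is properly purely infinite. -/
theorem purelyInfinite_iff_properlyPurelyInfinite_of_sunital_exchange
    {R : Type*} [NonUnitalRing R] (hs : IsSUnitalRing R) (hex : IsExchangeRing R) :
    IsPurelyInfiniteRing R ↔ IsProperlyPurelyInfiniteRing R := by
  exact ⟨hard_dir hs hex, easy_dir⟩
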